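/- Any two complete Bergman games starting from the same initial state S contain exactly the same number of combine moves; equivalently, the number of combine moves in a complete game from S equals ∑_i S i minus the chip count of its terminal state, and this quantity is the same for all complete games from S. -/

import Mathlib

noncomputable section

/-- The golden ratio. -/
def phi : ℝ := (1 + Real.sqrt 5) / 2

/-- Base-φ logarithm. -/
def logphi (x : ℝ) : ℝ := Real.logb phi x

/-- A Bergman state: a finitely supported function from ℤ to ℕ. -/
abbrev BState := ℤ →₀ ℕ

/-- A split move at index `i`. -/
def SplitAt (S S' : BState) (i : ℤ) : Prop :=
  2 ≤ S i ∧
    S' = S - Finsupp.single i 2 + Finsupp.single (i + 1) 1 + Finsupp.single (i - 2) 1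

/-- A combine move at index `i`. -/
def CombineAt (S S' : BState) (i : ℤ) : Prop :=
  1 ≤ S i ∧ 1 ≤ S (i + 1) ∧
    S' = S - Finsupp.single i 1 - Finsupp.single (i + 1) 1 + Finsupp.single (i + 2) 1

/-- A move is a split or a combine. -/
def Move (S S' : BState) : Prop := (∃ i, SplitAt S S' i) ∨ (∃ i, CombineAt S S' i)

/-- Terminal state: no move is legal. -/
def Terminal (S : BState) : Prop :=
  (∀ i, S i ≤ 1) ∧ ∀ i, ¬(1 ≤ S i ∧ 1 ≤ S (i + 1))

/-- A Bergman game of length `m` from `S`. -/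
def Game (S : BState) (m : ℕ) (g : ℕ → BState) : Prop :=
  g 0 = S ∧ ∀ j < m, Move (g j) (g (j + 1))

/-- A complete Bergman game of length `m` from `S`. -/
def CompleteGame (S : BState) (m : ℕ) (g : ℕ → BState) : Prop :=
  Game S m g ∧ Terminal (g m)

/-- Reachability by a finite sequence of moves. -/
def Reachable : BState → BState → Prop := Relation.ReflTransGen Move

/-- Reachability by split moves only. -/
def SplitReachable : BState → BState → Prop :=
  Relation.ReflTransGen fun S S' => ∃ i, SplitAt S S' i

/-- The initial state `₀(n)`: `n` chips at index 0. -/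
def initState (n : ℕ) : BState := Finsupp.single 0 n

/-- Total number of chips in a state. -/
def chips (S : BState) : ℕ := S.sum fun _ c => c

open Classical in
/-- The number of split moves among the first `m` steps of `g`. -/
def splitCount (g : ℕ → BState) (m : ℕ) : ℕ :=
  ((Finset.range m).filter fun j => ∃ i, SplitAt (g j) (g (j + 1)) i).card

open Classical in
/-- The number of combine moves among the first `m` steps of `g`. -/
def combineCount (g : ℕ → BState) (m : ℕ) : ℕ :=
  ((Finset.range m).filter fun j => ∃ i, CombineAt (g j) (g (j + 1)) i).card

/-!
Every move preserves the value `∑ i, S i * φ ^ i` of a state; a split preserves the number of chips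
and a combine lowers it by one. Hence a game from `S` to `T` has exactly `chips S - chips T`
combines, and it suffices that the terminal state is determined by its value. A terminal state is
the indicator of a finite set without consecutive elements, and the powers of `φ` over such a set
sum to less than the next power of `φ` above its maximum. So the values of terminal states are
ordered by the largest index at which they differ, and are in particular pairwise distinct.
-/

/-- A set of exponents without two consecutive elements, as occur in a base-`φ` expansion in
standard form. It is the condition that terminal states put on their supports. -/
def IsSparse (A : Finset ℤ) : Prop := ∀ i ∈ A, i + 1 ∉ A

theorem IsSparse.mono {A B : Finset ℤ} (hB : IsSparse B) (hAB : A ⊆ B) : IsSparse A :=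
  fun i hi hi' => hB i (hAB hi) (hAB hi')

theorem IsSparse.lt_sub_one_of_insert {A : Finset ℤ} {a : ℤ} (h : IsSparse (insert a A))
    (hA : ∀ i ∈ A, i < a) : ∀ i ∈ A, i < a - 1 := by
  intro i hi
  have hne : i + 1 ≠ a := by
    rintro rfl
    exact h i (Finset.mem_insert_of_mem hi) (Finset.mem_insert_self _ _)
  have := hA i hi
  omega

section SuperFibonacciWeight

theorem monotone_of_nonneg_of_add_le {M : Type*} [AddCommMonoid M] [PartialOrder M]
    [IsOrderedAddMonoid M] {w : ℤ → M} (hnonneg : ∀ i, 0 ≤ w i)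
    (hw : ∀ i, w i + w (i + 1) ≤ w (i + 2)) : Monotone w := by
  refine monotone_int_of_le_succ fun i => ?_
  have hstep := hw (i - 1)
  rw [sub_add_cancel, show i - 1 + 2 = i + 1 by ring] at hstep
  exact (le_add_of_nonneg_left (hnonneg _)).trans hstep

variable {M : Type*} [AddCommMonoid M] [PartialOrder M] [IsOrderedCancelAddMonoid M] {w : ℤ → M}

theorem IsSparse.sum_lt {A : Finset ℤ} (hA : IsSparse A) (hpos : ∀ i, 0 < w i)
    (hw : ∀ i, w i + w (i + 1) ≤ w (i + 2)) {k : ℤ} (hk : ∀ i ∈ A, i < k) :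
    ∑ i ∈ A, w i < w k := by
  induction A using Finset.induction_on_max generalizing k with
  | empty => simpa using hpos k
  | insert a A hlt ih =>
    have hrest : ∑ i ∈ A, w i < w (a - 1) :=
      ih (hA.mono (Finset.subset_insert a A)) (hA.lt_sub_one_of_insert hlt)
    have hstep := hw (a - 1)
    rw [sub_add_cancel, show a - 1 + 2 = a + 1 by ring] at hstep
    calc ∑ i ∈ insert a A, w i
        = ∑ i ∈ A, w i + w a := by
          rw [Finset.sum_insert fun ha => (hlt a ha).false, add_comm]
      _ < w (a - 1) + w a := by gcongr
      _ ≤ w (a + 1) := hstep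
      _ ≤ w k :=
          monotone_of_nonneg_of_add_le (fun i => (hpos i).le) hw (hk a (Finset.mem_insert_self a A))

theorem IsSparse.sum_lt_sum_of_toColex_lt {A B : Finset ℤ} (hA : IsSparse A)
    (hpos : ∀ i, 0 < w i) (hw : ∀ i, w i + w (i + 1) ≤ w (i + 2))
    (hAB : toColex A < toColex B) : ∑ i ∈ A, w i < ∑ i ∈ B, w i := by
  obtain ⟨b, hbB, hbA, hlt⟩ := Finset.Colex.toColex_lt_toColex_iff_exists_forall_lt.1 hAB
  rw [← Finset.sum_sdiff_lt_sum_sdiff]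
  calc ∑ i ∈ A \ B, w i
      < w b := (hA.mono Finset.sdiff_subset).sum_lt hpos hw fun i hi =>
        hlt i (Finset.mem_sdiff.1 hi).1 (Finset.mem_sdiff.1 hi).2
    _ ≤ ∑ i ∈ B \ A, w i :=
        Finset.single_le_sum (fun i _ => (hpos i).le) (Finset.mem_sdiff.2 ⟨hbB, hbA⟩)

theorem IsSparse.eq_of_sum_eq {A B : Finset ℤ} (hA : IsSparse A) (hB : IsSparse B)
    (hpos : ∀ i, 0 < w i) (hw : ∀ i, w i + w (i + 1) ≤ w (i + 2))
    (hsum : ∑ i ∈ A, w i = ∑ i ∈ B, w i) : A = B := by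
  rcases lt_trichotomy (toColex A) (toColex B) with hlt | heq | hgt
  · exact absurd hsum (hA.sum_lt_sum_of_toColex_lt hpos hw hlt).ne
  · exact toColex_inj.1 heq
  · exact absurd hsum (hB.sum_lt_sum_of_toColex_lt hpos hw hgt).ne'

end SuperFibonacciWeight

namespace Terminal

variable {T T' : BState}

theorem eq_one_of_mem_support (hT : Terminal T) {i : ℤ} (hi : i ∈ T.support) : T i = 1 :=
  le_antisymm (hT.1 i) (Nat.one_le_iff_ne_zero.2 (Finsupp.mem_support_iff.1 hi))

theorem isSparse_support (hT : Terminal T) : IsSparse T.support := fun i hi hi' =>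
  hT.2 i ⟨(hT.eq_one_of_mem_support hi).ge, (hT.eq_one_of_mem_support hi').ge⟩

theorem eq_of_support_eq (hT : Terminal T) (hT' : Terminal T') (h : T.support = T'.support) :
    T = T' :=
  Finsupp.ext_iff'.2 ⟨h, fun _ hi =>
    (hT.eq_one_of_mem_support hi).trans (hT'.eq_one_of_mem_support (h ▸ hi)).symm⟩

theorem weight_eq_sum_support {M : Type*} [AddCommMonoid M] (hT : Terminal T) (w : ℤ → M) :
    Finsupp.weight w T = ∑ i ∈ T.support, w i :=
  Finset.sum_congr rfl fun i hi => by simp [hT.eq_one_of_mem_support hi]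

theorem eq_of_weight_eq {M : Type*} [AddCommMonoid M] [PartialOrder M]
    [IsOrderedCancelAddMonoid M] {w : ℤ → M} (hT : Terminal T) (hT' : Terminal T')
    (hpos : ∀ i, 0 < w i) (hw : ∀ i, w i + w (i + 1) ≤ w (i + 2))
    (h : Finsupp.weight w T = Finsupp.weight w T') : T = T' := by
  rw [hT.weight_eq_sum_support, hT'.weight_eq_sum_support] at h
  exact hT.eq_of_support_eq hT' (hT.isSparse_support.eq_of_sum_eq hT'.isSparse_support hpos hw h)

end Terminal

theorem chips_eq_degree (S : BState) : chips S = S.degree := rfl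

section Moves

variable {S S' : BState} {i : ℤ}

theorem SplitAt.exists_eq_add (h : SplitAt S S' i) :
    ∃ R : BState, S = R + Finsupp.single i 2 ∧
      S' = R + Finsupp.single (i + 1) 1 + Finsupp.single (i - 2) 1 :=
  ⟨S - Finsupp.single i 2, (tsub_add_cancel_of_le (Finsupp.single_le_iff.2 h.1)).symm, h.2⟩

theorem CombineAt.exists_eq_add (h : CombineAt S S' i) :
    ∃ R : BState, S = R + Finsupp.single (i + 1) 1 + Finsupp.single i 1 ∧
      S' = R + Finsupp.single (i + 2) 1 := by
  obtain ⟨hi, hi', hS'⟩ := h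
  refine ⟨_, ?_, hS'⟩
  have hle : Finsupp.single (i + 1) 1 ≤ S - Finsupp.single i 1 :=
    Finsupp.single_le_iff.2 (by simpa using hi')
  rw [tsub_add_cancel_of_le hle, tsub_add_cancel_of_le (Finsupp.single_le_iff.2 hi)]

theorem SplitAt.chips_eq (h : SplitAt S S' i) : chips S' = chips S := by
  obtain ⟨R, rfl, rfl⟩ := h.exists_eq_add
  simp only [chips_eq_degree, map_add, Finsupp.degree_single]

theorem CombineAt.chips_add_one (h : CombineAt S S' i) : chips S' + 1 = chips S := by
  obtain ⟨R, rfl, rfl⟩ := h.exists_eq_add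
  simp only [chips_eq_degree, map_add, Finsupp.degree_single]

variable {M : Type*} [AddCommMonoid M] {w : ℤ → M}

theorem SplitAt.weight_eq (hw : ∀ i, w i + w (i + 1) = w (i + 2)) (h : SplitAt S S' i) :
    Finsupp.weight w S' = Finsupp.weight w S := by
  obtain ⟨R, rfl, rfl⟩ := h.exists_eq_add
  have hsplit : w (i + 1) + w (i - 2) = 2 • w i := by
    have hlow := hw (i - 2)
    have hhigh := hw (i - 1)
    rw [show i - 2 + 1 = i - 1 by ring, sub_add_cancel] at hlow
    rw [sub_add_cancel, show i - 1 + 2 = i + 1 by ring] at hhigh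
    rw [← hhigh, add_right_comm, add_comm (w (i - 1)), hlow, two_nsmul]
  simp only [map_add, Finsupp.weight_single, one_smul, add_assoc, hsplit]

theorem CombineAt.weight_eq (hw : ∀ i, w i + w (i + 1) = w (i + 2)) (h : CombineAt S S' i) :
    Finsupp.weight w S' = Finsupp.weight w S := by
  obtain ⟨R, rfl, rfl⟩ := h.exists_eq_add
  simp only [map_add, Finsupp.weight_single, one_smul, add_assoc, add_comm (w (i + 1)), hw]

theorem Move.weight_eq (hw : ∀ i, w i + w (i + 1) = w (i + 2)) (h : Move S S') :
    Finsupp.weight w S' = Finsupp.weight w S := by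
  rcases h with ⟨i, hsplit⟩ | ⟨i, hcombine⟩
  · exact hsplit.weight_eq hw
  · exact hcombine.weight_eq hw

end Moves

section Games

open Classical in
theorem combineCount_succ (g : ℕ → BState) (m : ℕ) :
    combineCount g (m + 1) =
      combineCount g m + if ∃ i, CombineAt (g m) (g (m + 1)) i then 1 else 0 := by
  simp only [combineCount, Finset.card_filter, Finset.sum_range_succ]

open Classical in
theorem Move.chips_add_ite {S S' : BState} (h : Move S S') :
    chips S' + (if ∃ i, CombineAt S S' i then 1 else 0) = chips S := by
  split_ifs with hcombine
  · obtain ⟨i, hi⟩ := hcombine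
    exact hi.chips_add_one
  · obtain ⟨i, hi⟩ := h.resolve_right hcombine
    exact hi.chips_eq

variable {S : BState} {m : ℕ} {g : ℕ → BState}

theorem Game.of_succ (h : Game S (m + 1) g) : Game S m g :=
  ⟨h.1, fun j hj => h.2 j (hj.trans m.lt_succ_self)⟩

theorem Game.chips_add_combineCount (h : Game S m g) :
    chips (g m) + combineCount g m = chips S := by
  induction m with
  | zero => simp [combineCount, h.1]
  | succ m ih =>
    rw [← ih h.of_succ, ← (h.2 m m.lt_succ_self).chips_add_ite, combineCount_succ]
    ring

theorem Game.weight_eq {M : Type*} [AddCommMonoid M] {w : ℤ → M}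
    (hw : ∀ i, w i + w (i + 1) = w (i + 2)) (h : Game S m g) :
    Finsupp.weight w (g m) = Finsupp.weight w S := by
  induction m with
  | zero => rw [h.1]
  | succ m ih => exact ((h.2 m m.lt_succ_self).weight_eq hw).trans (ih h.of_succ)

end Games

theorem phi_pos : 0 < phi := Real.goldenRatio_pos

theorem phi_zpow_add_phi_zpow_add_one (i : ℤ) : phi ^ i + phi ^ (i + 1) = phi ^ (i + 2) := by
  have hsq : phi ^ (2 : ℤ) = phi + 1 := by exact_mod_cast Real.goldenRatio_sq
  rw [zpow_add₀ phi_pos.ne', zpow_add₀ phi_pos.ne', hsq, zpow_one]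
  ring

/-- The real number `∑ i, S i * φ ^ i` that a state `S` represents, the invariant of the game. -/
def goldenValue : BState →+ ℝ := Finsupp.weight fun i : ℤ => phi ^ i

theorem Game.goldenValue_eq {S : BState} {m : ℕ} {g : ℕ → BState} (h : Game S m g) :
    goldenValue (g m) = goldenValue S :=
  h.weight_eq phi_zpow_add_phi_zpow_add_one

theorem Terminal.eq_of_goldenValue_eq {T T' : BState} (hT : Terminal T) (hT' : Terminal T')
    (h : goldenValue T = goldenValue T') : T = T' :=
  hT.eq_of_weight_eq hT' (zpow_pos phi_pos) (fun i => (phi_zpow_add_phi_zpow_add_one i).le) h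

theorem CompleteGame.terminal_eq_of_goldenValue_eq {S₁ S₂ : BState} {m₁ m₂ : ℕ}
    {g₁ g₂ : ℕ → BState} (h₁ : CompleteGame S₁ m₁ g₁) (h₂ : CompleteGame S₂ m₂ g₂)
    (hS : goldenValue S₁ = goldenValue S₂) : g₁ m₁ = g₂ m₂ :=
  h₁.2.eq_of_goldenValue_eq h₂.2 <| by rw [h₁.1.goldenValue_eq, h₂.1.goldenValue_eq, hS]

/-- Any two complete Bergman games from the same initial state contain the same number of
combine moves, namely the chip count of `S` minus the chip count of the terminal state. -/
theorem bergman_combine_count_invariant (S : BState)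
    (m₁ : ℕ) (g₁ : ℕ → BState) (h₁ : CompleteGame S m₁ g₁)
    (m₂ : ℕ) (g₂ : ℕ → BState) (h₂ : CompleteGame S m₂ g₂) :
    combineCount g₁ m₁ = combineCount g₂ m₂ ∧
      combineCount g₁ m₁ = chips S - chips (g₁ m₁) ∧
      combineCount g₂ m₂ = chips S - chips (g₂ m₂) := by
  have hterminal : g₁ m₁ = g₂ m₂ := h₁.terminal_eq_of_goldenValue_eq h₂ rfl
  have hcount₁ : chips (g₁ m₁) + combineCount g₁ m₁ = chips S := h₁.1.chips_add_combineCount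
  have hcount₂ : chips (g₂ m₂) + combineCount g₂ m₂ = chips S := h₂.1.chips_add_combineCount
  rw [hterminal] at hcount₁ ⊢
  omega
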